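/- Every uncountable subspace of the Sorgenfrey line fails to be a Lindelöf Σ-space: if Y is an uncountable subset of the Sorgenfrey line, then Y with the subspace topology is not a Lindelöf Σ-space. -/

import Mathlib

open Set Function TopologicalSpace

universe u

/-- A map between topological spaces is *perfect* if it is continuous, closed, and
every fiber is compact. -/
def PerfectMap {Y : Type*} {Z : Type*} [TopologicalSpace Y] [TopologicalSpace Z]
    (f : Y → Z) : Prop :=
  Continuous f ∧ IsClosedMap f ∧ ∀ z : Z, IsCompact (f ⁻¹' {z})

/-- A topological space `X` is a *Lindelöf Σ-space* if there exist a topological space `Y`,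
a continuous surjection from `Y` onto `X`, and a perfect surjection from `Y` onto some
second-countable space. -/
def IsLindelofSigma (X : Type u) [TopologicalSpace X] : Prop :=
  ∃ (Y : Type u) (tY : TopologicalSpace Y) (Z : Type u) (tZ : TopologicalSpace Z),
    @SecondCountableTopology Z tZ ∧
    (∃ f : Y → X, @Continuous Y X tY _ f ∧ Surjective f) ∧
    (∃ g : Y → Z, @PerfectMap Y Z tY tZ g ∧ Surjective g)

/-- A topological space `X` is a *charming space* if there is a subset `Y` of `X` that is a
Lindelöf Σ-space in the subspace topology and such that for every open `U ⊇ Y`,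
the set `X \ U` is a Lindelöf Σ-space in the subspace topology. -/
def IsCharming (X : Type u) [TopologicalSpace X] : Prop :=
  ∃ Y : Set X, IsLindelofSigma Y ∧
    ∀ U : Set X, IsOpen U → Y ⊆ U → IsLindelofSigma ↥(Uᶜ)

/-- A *CL-charming* space: the shell `Y` can be chosen closed. -/
def IsCLCharming (X : Type u) [TopologicalSpace X] : Prop :=
  ∃ Y : Set X, IsClosed Y ∧ IsLindelofSigma Y ∧
    ∀ U : Set X, IsOpen U → Y ⊆ U → IsLindelofSigma ↥(Uᶜ)

/-- A *CO-charming* space: the shell `Y` can be chosen compact. -/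
def IsCOCharming (X : Type u) [TopologicalSpace X] : Prop :=
  ∃ Y : Set X, IsCompact Y ∧ IsLindelofSigma Y ∧
    ∀ U : Set X, IsOpen U → Y ⊆ U → IsLindelofSigma ↥(Uᶜ)

/-- A space has a *countable network* if there is a countable family `N` of subsets such that
every point in every open set `V` is contained in a member of `N` contained in `V`. -/
def HasCountableNetwork (X : Type u) [TopologicalSpace X] : Prop :=
  ∃ N : Set (Set X), N.Countable ∧
    ∀ x : X, ∀ V : Set X, IsOpen V → x ∈ V → ∃ n ∈ N, x ∈ n ∧ n ⊆ V

/-- A topological space `X` is *weak (4,4)-structured* if there exist a topological space `Y`,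
a continuous surjection from `Y` onto `X`, and a perfect surjection from `Y` onto some
charming space. -/
def IsWeak44Structured (X : Type u) [TopologicalSpace X] : Prop :=
  ∃ (Y : Type u) (tY : TopologicalSpace Y) (M : Type u) (tM : TopologicalSpace M),
    @IsCharming M tM ∧
    (∃ f : Y → X, @Continuous Y X tY _ f ∧ Surjective f) ∧
    (∃ g : Y → M, @PerfectMap Y M tY tM g ∧ Surjective g)

/-- The Sorgenfrey line: `ℝ` with the topology generated by half-open intervals `[a, b)`. -/
def sorgenfreyTopology : TopologicalSpace ℝ :=
  TopologicalSpace.generateFrom {s : Set ℝ | ∃ a b : ℝ, s = Set.Ico a b}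

/-!
Continuous images of the fibers of a perfect map onto a second-countable space are compact, and
images of preimages of basic open sets form a countable network around them. If the space also has
a coarser second-countable T₁ topology, then for `x` in a compact set `K` and an open `V ∋ x`,
finitely many basic open sets of that topology cover `K \ V` and miss `x`; removing them from a
network set around `K` leaves a subset of `V` containing `x`, so the space has a countable network.
In an uncountable subspace of the Sorgenfrey line this is impossible: network members `N x` with
`x ∈ N x ⊆ [x, ∞)` are distinct for distinct `x`.
-/

open scoped Topology

/-- `X` has a *countable network modulo a compact cover*: every point lies in a compact set `K` such
that each open `U ⊇ K` has a member of one fixed countable family between `K` and `U`. This is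
Nagami's internal description of Lindelöf Σ-spaces; the compact cover is left implicit. -/
def HasCountableNetworkModuloCompacts (X : Type u) [TopologicalSpace X] : Prop :=
  ∃ 𝒩 : Set (Set X), 𝒩.Countable ∧
    ∀ x : X, ∃ K : Set X, IsCompact K ∧ x ∈ K ∧
      ∀ U : Set X, IsOpen U → K ⊆ U → ∃ N ∈ 𝒩, K ⊆ N ∧ N ⊆ U

section Networks

variable {X : Type u} [TopologicalSpace X]

theorem exists_mem_basis_preimage_subset {W Z : Type*} [TopologicalSpace W] [TopologicalSpace Z]
    {g : W → Z} (hg : IsClosedMap g) {ℬ : Set (Set Z)} (hℬ : IsTopologicalBasis ℬ)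
    {U : Set W} (hU : IsOpen U) {z : Z} (hz : g ⁻¹' {z} ⊆ U) :
    ∃ B ∈ ℬ, z ∈ B ∧ g ⁻¹' B ⊆ U := by
  obtain ⟨B, hB, hzB, hBU⟩ := hℬ.exists_subset_of_mem_open (show z ∈ kernImage g U from hz)
    (isClosedMap_iff_kernImage.1 hg hU)
  exact ⟨B, hB, hzB, subset_kernImage_iff.1 hBU⟩

theorem IsLindelofSigma.hasCountableNetworkModuloCompacts (hX : IsLindelofSigma X) :
    HasCountableNetworkModuloCompacts X := by
  obtain ⟨W, _, Z, _, _, ⟨f, hf, hf_surj⟩, g, ⟨_, hg_closed, hg_fiber⟩, _⟩ := hX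
  refine ⟨(fun B => f '' (g ⁻¹' B)) '' countableBasis Z, (countable_countableBasis Z).image _,
    hf_surj.forall.2 fun w => ?_⟩
  refine ⟨f '' (g ⁻¹' {g w}), (hg_fiber (g w)).image hf, mem_image_of_mem f rfl, fun U hU hKU => ?_⟩
  obtain ⟨B, hB, hwB, hBU⟩ := exists_mem_basis_preimage_subset hg_closed
    (isBasis_countableBasis Z) (hU.preimage hf) (image_subset_iff.1 hKU)
  exact ⟨_, mem_image_of_mem _ hB,
    image_mono (preimage_mono (singleton_subset_iff.2 hwB)), image_subset_iff.2 hBU⟩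

theorem exists_finite_basis_sUnion_between {M : Type*} [TopologicalSpace M] {ℬ : Set (Set M)}
    (hℬ : IsTopologicalBasis ℬ) {C U : Set M} (hC : IsCompact C) (hU : IsOpen U) (hCU : C ⊆ U) :
    ∃ ℱ ⊆ ℬ, ℱ.Finite ∧ C ⊆ ⋃₀ ℱ ∧ ⋃₀ ℱ ⊆ U := by
  have hcover : C ⊆ ⋃₀ {B ∈ ℬ | B ⊆ U} := hCU.trans (hℬ.open_eq_sUnion' hU).subset
  rw [sUnion_eq_biUnion] at hcover
  obtain ⟨ℱ, hℱ, hℱ_finite, hCℱ⟩ :=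
    hC.elim_finite_subcover_image (fun B hB => hℬ.isOpen hB.1) hcover
  exact ⟨ℱ, fun B hB => (hℱ hB).1, hℱ_finite, sUnion_eq_biUnion ▸ hCℱ,
    sUnion_subset fun B hB => (hℱ hB).2⟩

theorem HasCountableNetworkModuloCompacts.hasCountableNetwork {M : Type*} [TopologicalSpace M]
    [SecondCountableTopology M] [T1Space M] (hX : HasCountableNetworkModuloCompacts X)
    {i : X → M} (hi : Continuous i) (hi_inj : Injective i) : HasCountableNetwork X := by
  obtain ⟨𝒩, h𝒩, hK⟩ := hX
  refine ⟨image2 (fun N ℱ => N \ i ⁻¹' ⋃₀ ℱ) 𝒩 {ℱ | ℱ.Finite ∧ ℱ ⊆ countableBasis M},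
    h𝒩.image2 (countable_ofPred_finite_subset (countable_countableBasis M)) _, fun x V hV hxV => ?_⟩
  obtain ⟨K, hK_compact, hxK, hK_network⟩ := hK x
  have himage : i '' (K \ V) ⊆ {i x}ᶜ := by
    rintro _ ⟨y, hy, rfl⟩ hyx
    exact hy.2 (hi_inj hyx ▸ hxV)
  obtain ⟨ℱ, hℱ, hℱ_finite, hKℱ, hxℱ⟩ := exists_finite_basis_sUnion_between
    (isBasis_countableBasis M) ((hK_compact.diff hV).image hi) isOpen_compl_singleton himage
  have hℱ_open : IsOpen (⋃₀ ℱ) := isOpen_sUnion fun B hB => isOpen_of_mem_countableBasis (hℱ hB)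
  obtain ⟨N, hN, hKN, hNV⟩ := hK_network (V ∪ i ⁻¹' ⋃₀ ℱ) (hV.union (hℱ_open.preimage hi))
    (sdiff_subset_iff.1 (image_subset_iff.1 hKℱ))
  exact ⟨_, mem_image2_of_mem hN ⟨hℱ_finite, hℱ⟩, ⟨hKN hxK, fun h => hxℱ h rfl⟩,
    sdiff_subset_iff.2 (union_comm V _ ▸ hNV)⟩

theorem HasCountableNetwork.countable_of_isOpen_Ici [PartialOrder X] (hX : HasCountableNetwork X)
    (hIci : ∀ x : X, IsOpen (Ici x)) : Countable X := by
  obtain ⟨𝒩, h𝒩, hnetwork⟩ := hX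
  choose N hN hxN hNx using fun x => hnetwork x (Ici x) (hIci x) self_mem_Ici
  have hN_inj : Injective N := fun x y hxy =>
    le_antisymm (hNx x (hxy ▸ hxN y)) (hNx y (hxy ▸ hxN x))
  have : Countable 𝒩 := h𝒩.to_subtype
  exact (hN_inj.codRestrict hN).countable

end Networks

namespace sorgenfreyTopology

theorem isOpen_Ico (a b : ℝ) : IsOpen[sorgenfreyTopology] (Ico a b) :=
  .basic _ ⟨a, b, rfl⟩

theorem isOpen_Ici (a : ℝ) : IsOpen[sorgenfreyTopology] (Ici a) := by
  rw [← iUnion_Ico_right]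
  exact @isOpen_iUnion _ _ sorgenfreyTopology _ (isOpen_Ico a)

theorem isOpen_Iio (b : ℝ) : IsOpen[sorgenfreyTopology] (Iio b) := by
  rw [← iUnion_Ico_left]
  exact @isOpen_iUnion _ _ sorgenfreyTopology _ fun a => isOpen_Ico a b

theorem isOpen_Ioi (a : ℝ) : IsOpen[sorgenfreyTopology] (Ioi a) := by
  rw [← isGLB_Ioi.biUnion_Ici_eq_Ioi self_notMem_Ioi]
  exact @isOpen_biUnion _ _ sorgenfreyTopology _ _ fun b _ => isOpen_Ici b

theorem le_euclidean : sorgenfreyTopology ≤ (inferInstance : TopologicalSpace ℝ) := by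
  rw [OrderTopology.topology_eq_generate_intervals (α := ℝ)]
  refine le_generateFrom ?_
  rintro _ ⟨a, rfl | rfl⟩
  · exact isOpen_Ioi a
  · exact isOpen_Iio a

end sorgenfreyTopology

theorem uncountable_sorgenfrey_subspace_not_lindelofSigma_general {X : Type u} [PartialOrder X]
    (t : TopologicalSpace X) [tX : TopologicalSpace X] [SecondCountableTopology X] [T1Space X]
    (ht : t ≤ tX) (hIci : ∀ x : X, IsOpen[t] (Ici x))
    (Y : Set X) (hY : ¬ Y.Countable) :
    ¬ @IsLindelofSigma ↥Y (TopologicalSpace.induced (Subtype.val : Y → X) t) := by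
  let : TopologicalSpace Y := t.induced Subtype.val
  have hval : Continuous (Subtype.val : Y → X) := continuous_iff_le_induced.2 (induced_mono ht)
  have hIci_Y (y : Y) : IsOpen (Ici y) := ⟨Ici (y : X), hIci y, rfl⟩
  intro hLindelof
  have hnetwork : HasCountableNetwork Y :=
    hLindelof.hasCountableNetworkModuloCompacts.hasCountableNetwork hval Subtype.val_injective
  exact hY (hnetwork.countable_of_isOpen_Ici hIci_Y).to_set

/-- Every uncountable subspace of the Sorgenfrey line fails to be a Lindelöf Σ-space. -/
theorem uncountable_sorgenfrey_subspace_not_lindelofSigma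
    (Y : Set ℝ) (hY : ¬ Y.Countable) :
    ¬ @IsLindelofSigma ↥Y (TopologicalSpace.induced (Subtype.val : Y → ℝ) sorgenfreyTopology) := by
  exact uncountable_sorgenfrey_subspace_not_lindelofSigma_general sorgenfreyTopology
    sorgenfreyTopology.le_euclidean sorgenfreyTopology.isOpen_Ici Y hY
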